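/- Assume the curve setup with counterclockwise orientation and let a well distributed mesh with parameters κ ≥ 2 and M > 0 be given. Then there exist C > 0 and N₀ such that for every N ≥ N₀: max_{1≤k≤N} |(L/N)·Σ_{j=1}^{N} γ'(s̃_j^N)/(γ(s̃_j^N) − γ(s_k^N)) − iπ| ≤ C·N^{−κ}, where γ(s) = l₁(s) + i·l₂(s) ∈ ℂ. -/

import Mathlib

open Real MeasureTheory

theorem dci_param_smooth (n : ℕ) : ∀ {E : Type} [NormedAddCommGroup E] [NormedSpace ℝ E] [CompleteSpace E]
    (F : (ℝ × ℝ) × ℝ → E) (_ : ContDiff ℝ (⊤ : ℕ∞) F),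
    ContDiff ℝ n (fun x : ℝ × ℝ => ∫ u in (0:ℝ)..1, F (x, u)) := by
  induction n with
  | zero =>
    intro E _ _ _ F hF
    rw [Nat.cast_zero, contDiff_zero]
    exact intervalIntegral.continuous_parametric_intervalIntegral_of_continuous'
      (f := fun x u => F (x, u)) hF.continuous 0 1
  | succ n ih =>
    intro E _ _ _ F hF
    rw [Nat.cast_succ, contDiff_succ_iff_hasFDerivAt]
    have hF1 : ContDiff ℝ (⊤ : ℕ∞) (fun p : (ℝ × ℝ) × ℝ =>
        (fderiv ℝ F p).comp (ContinuousLinearMap.inl ℝ (ℝ × ℝ) ℝ)) := by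
      have : ContDiff ℝ (⊤ : ℕ∞) (fderiv ℝ F) := hF.fderiv_right (by simp)
      exact this.clm_comp contDiff_const
    refine ⟨_, ih _ hF1, fun x => ?_⟩
    have hc := hF1.continuous
    obtain ⟨B, hB⟩ := ((isCompact_closedBall x 1).prod (isCompact_Icc (a := (0:ℝ)) (b := 1))).exists_bound_of_continuousOn hc.continuousOn
    refine intervalIntegral.hasFDerivAt_integral_of_dominated_of_fderiv_le
      (F := fun x u => F (x, u))
      (F' := fun x u => (fderiv ℝ F (x, u)).comp (ContinuousLinearMap.inl ℝ (ℝ × ℝ) ℝ))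
      (bound := fun _ => B)
      (Metric.closedBall_mem_nhds x one_pos) ?_ ?_ ?_ ?_ ?_ ?_
    · filter_upwards with y
      exact (hF.continuous.comp (by fun_prop : Continuous fun u : ℝ => (y, u))).aestronglyMeasurable
    · exact (hF.continuous.comp (by fun_prop : Continuous fun u : ℝ => (x, u))).intervalIntegrable _ _
    · exact (hc.comp (by fun_prop : Continuous fun u : ℝ => (x, u))).aestronglyMeasurable
    · filter_upwards with t ht y hy
      rw [Set.uIoc_of_le zero_le_one] at ht
      exact hB (y, t) ⟨hy, ht.1.le, ht.2⟩
    · exact intervalIntegrable_const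
    · filter_upwards with t ht y hy
      have h1 : HasFDerivAt F (fderiv ℝ F (y, t)) (y, t) :=
        (hF.differentiable (by simp) _).hasFDerivAt
      exact h1.comp y (hasFDerivAt_prodMk_left y t)

/-- Divided difference. -/
noncomputable def dciP (g : ℝ → ℂ) (p : ℝ × ℝ) : ℂ :=
  ∫ u in (0:ℝ)..1, deriv g (p.1 + u * (p.2 - p.1))

theorem dciP_smooth {g : ℝ → ℂ} (hg : ContDiff ℝ (⊤ : ℕ∞) g) : ContDiff ℝ (⊤ : ℕ∞) (dciP g) := by
  rw [contDiff_infty]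
  intro n
  have hd : ContDiff ℝ (⊤ : ℕ∞) (deriv g) := by
    have := (contDiff_infty_iff_deriv.1 hg).2
    exact this
  exact dci_param_smooth n (fun q : (ℝ × ℝ) × ℝ => deriv g (q.1.1 + q.2 * (q.1.2 - q.1.1)))
    (hd.comp (by fun_prop))

theorem dciP_diag (g : ℝ → ℂ) (s : ℝ) : dciP g (s, s) = deriv g s := by
  simp [dciP]

theorem dciP_mul {g : ℝ → ℂ} (hg : ContDiff ℝ (⊤ : ℕ∞) g) (s t : ℝ) :
    ((t - s : ℝ) : ℂ) * dciP g (s, t) = g t - g s := by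
  have hd : Continuous (deriv g) := (contDiff_infty_iff_deriv.1 hg).2.continuous
  have h : ∀ u ∈ Set.uIcc (0:ℝ) 1, HasDerivAt (fun u : ℝ => g (s + u * (t - s)))
      (((t - s : ℝ) : ℂ) * deriv g (s + u * (t - s))) u := by
    intro u _
    have h1 : HasDerivAt g (deriv g (s + u * (t - s))) (s + u * (t - s)) :=
      (hg.differentiable (by simp) _).hasDerivAt
    have h2 : HasDerivAt (fun u : ℝ => s + u * (t - s)) (t - s) u := by
      simpa using ((hasDerivAt_id u).mul_const (t - s)).const_add s
    have := h1.scomp u h2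
    rw [Complex.real_smul] at this
    exact this
  have := intervalIntegral.integral_eq_sub_of_hasDerivAt h
    (Continuous.intervalIntegrable (by fun_prop) _ _)
  rw [intervalIntegral.integral_const_mul] at this
  simpa [dciP] using this

theorem dci_div_at {f g : ℝ × ℝ → ℂ} {p : ℝ × ℝ} (hf : ContDiffAt ℝ (⊤ : ℕ∞) f p)
    (hg : ContDiffAt ℝ (⊤ : ℕ∞) g p) (h : g p ≠ 0) :
    ContDiffAt ℝ (⊤ : ℕ∞) (fun p => f p / g p) p := by
  simp only [div_eq_mul_inv]
  exact hf.mul (hg.inv h)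

/-- Parametrisation of the unit circle with period `L`. -/
noncomputable def dciE (L : ℝ) (t : ℝ) : ℂ := Complex.exp (((2 * π / L * t : ℝ) : ℂ) * Complex.I)

theorem dciE_smooth (L : ℝ) : ContDiff ℝ (⊤ : ℕ∞) (dciE L) := by
  unfold dciE
  have : ContDiff ℝ (⊤ : ℕ∞) (fun t : ℝ => ((2 * π / L * t : ℝ) : ℂ) * Complex.I) :=
    (Complex.ofRealCLM.contDiff.comp (contDiff_const.mul contDiff_id)).mul contDiff_const
  exact this.cexp

theorem dciE_ne (L t : ℝ) : dciE L t ≠ 0 := Complex.exp_ne_zero _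

theorem dciE_norm (L t : ℝ) : ‖dciE L t‖ = 1 := Complex.norm_exp_ofReal_mul_I _

theorem dciE_add (L s t : ℝ) : dciE L (s + t) = dciE L s * dciE L t := by
  unfold dciE
  rw [← Complex.exp_add]
  congr 1
  push_cast
  ring

theorem dciE_zero (L : ℝ) : dciE L 0 = 1 := by simp [dciE]

theorem dciE_neg (L t : ℝ) : dciE L (-t) = (dciE L t)⁻¹ := by
  refine eq_inv_of_mul_eq_one_left ?_
  rw [← dciE_add]
  simp [dciE_zero]

theorem dciE_hasDeriv (L t : ℝ) :
    HasDerivAt (dciE L) (((2 * π / L : ℝ) : ℂ) * Complex.I * dciE L t) t := by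
  have h1 : HasDerivAt (fun t : ℝ => ((2 * π / L * t : ℝ) : ℂ) * Complex.I)
      (((2 * π / L : ℝ) : ℂ) * Complex.I) t := by
    have h0 : HasDerivAt (fun t : ℝ => (2 * π / L * t : ℝ)) (2 * π / L) t := by
      simpa using (hasDerivAt_id t).const_mul (2 * π / L)
    exact h0.ofReal_comp.mul_const _
  have := h1.cexp
  unfold dciE
  convert this using 1
  ring

theorem dciE_eq_iff {L : ℝ} (hL : 0 < L) (s t : ℝ) :
    dciE L t = dciE L s ↔ ∃ k : ℤ, t = s + k * L := by
  unfold dciE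
  rw [Complex.exp_eq_exp_iff_exists_int]
  have hpi := Real.pi_pos
  refine exists_congr fun k => ?_
  have : (((2 * π / L * t : ℝ) : ℂ) * Complex.I = ((2 * π / L * s : ℝ) : ℂ) * Complex.I + k * (2 * π * Complex.I))
     ↔ (2 * π / L * t : ℝ) = 2 * π / L * s + k * (2 * π) := by
    have h2 : (k : ℂ) * (2 * π * Complex.I) = k * (2 * π) * Complex.I := by ring
    rw [← Complex.ofReal_inj, h2, ← add_mul, mul_left_inj' Complex.I_ne_zero]
    push_cast
    rfl
  rw [this]
  constructor
  · intro h
    field_simp at h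
    linarith
  · rintro rfl
    field_simp

theorem dciE_per {L : ℝ} (hL : 0 < L) (t : ℝ) : dciE L (t + L) = dciE L t :=
  (dciE_eq_iff hL t (t + L)).2 ⟨1, by simp⟩

open Classical in
/-- Quotient of the divided differences of the curve and of the circle. -/
noncomputable def dciQ (L : ℝ) (g : ℝ → ℂ) (p : ℝ × ℝ) : ℂ :=
  if dciE L p.2 = dciE L p.1 then deriv g p.1 / deriv (dciE L) p.1
  else (g p.2 - g p.1) / (dciE L p.2 - dciE L p.1)

theorem dciE_deriv_ne {L : ℝ} (hL : 0 < L) (t : ℝ) : deriv (dciE L) t ≠ 0 := by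
  rw [(dciE_hasDeriv L t).deriv]
  have := Real.pi_pos
  refine mul_ne_zero (mul_ne_zero ?_ Complex.I_ne_zero) (dciE_ne L t)
  rw [Complex.ofReal_ne_zero]
  positivity

theorem dci_per_int {L : ℝ} {g : ℝ → ℂ} (hper : ∀ s, g (s + L) = g s) (t : ℝ) (k : ℤ) :
    g (t + k * L) = g t := by
  have h : Function.Periodic g L := hper
  exact h.int_mul k t

theorem dciQ_smooth {L : ℝ} (hL : 0 < L) {g : ℝ → ℂ} (hg : ContDiff ℝ (⊤ : ℕ∞) g)
    (hper : ∀ s, g (s + L) = g s) : ContDiff ℝ (⊤ : ℕ∞) (dciQ L g) := by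
  rw [contDiff_iff_contDiffAt]
  rintro ⟨s₀, t₀⟩
  have hE := dciE_smooth L
  by_cases h : dciE L t₀ = dciE L s₀
  · obtain ⟨k, rfl⟩ := (dciE_eq_iff hL _ _).1 h
    have hcd : ∀ f : ℝ → ℂ, ContDiff ℝ (⊤ : ℕ∞) f →
        ContDiff ℝ (⊤ : ℕ∞) (fun p : ℝ × ℝ => dciP f (p.1, p.2 - k * L)) := fun f hf =>
      (dciP_smooth hf).comp (by fun_prop)
    have hev : dciQ L g =ᶠ[nhds (s₀, s₀ + k * L)]
        fun p => dciP g (p.1, p.2 - k * L) / dciP (dciE L) (p.1, p.2 - k * L) := by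
      have hop : ∀ᶠ p : ℝ × ℝ in nhds (s₀, s₀ + k * L), |p.2 - k * L - p.1| < L := by
        have hc : Continuous fun p : ℝ × ℝ => |p.2 - k * L - p.1| := by fun_prop
        exact hc.continuousAt.eventually_lt continuousAt_const (by simpa using hL)
      filter_upwards [hop] with p hp
      obtain ⟨s, t⟩ := p
      simp only at hp ⊢
      unfold dciQ
      simp only
      split_ifs with hst
      · obtain ⟨m, rfl⟩ := (dciE_eq_iff hL _ _).1 hst
        have hm : m = k := by
          have h1 : |((m - k : ℤ) : ℝ)| * L < 1 * L := by
            rw [← abs_of_pos hL, ← abs_mul, abs_of_pos hL, one_mul]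
            have h0 : ((m - k : ℤ) : ℝ) * L = s + m * L - k * L - s := by
              push_cast
              ring
            rw [h0]
            exact hp
          have h2 := lt_of_mul_lt_mul_right h1 hL.le
          rw [← Int.cast_abs] at h2
          have h3 : |m - k| < 1 := by exact_mod_cast h2
          rw [Int.abs_lt_one_iff] at h3
          omega
        subst hm
        simp [dciP_diag]
      · have hne : ((t - k * L - s : ℝ) : ℂ) ≠ 0 := by
          rw [Complex.ofReal_ne_zero]
          intro h0
          exact hst ((dciE_eq_iff hL _ _).2 ⟨k, by linarith⟩)
        have e1 := dciP_mul hg s (t - k * L)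
        have e2 := dciP_mul hE s (t - k * L)
        have p1 := dci_per_int hper (t - k * L) k
        have p2 := dci_per_int (dciE_per hL) (t - k * L) k
        rw [sub_add_cancel] at p1 p2
        rw [p1, p2, ← e1, ← e2, mul_div_mul_left _ _ hne]
    refine ContDiffAt.congr_of_eventuallyEq ?_ hev
    refine dci_div_at (hcd g hg).contDiffAt (hcd _ hE).contDiffAt ?_
    simp only [add_sub_cancel_right, dciP_diag]
    exact dciE_deriv_ne hL _
  · have hop : ∀ᶠ p : ℝ × ℝ in nhds (s₀, t₀), dciE L p.2 - dciE L p.1 ≠ 0 := by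
      have hc : Continuous fun p : ℝ × ℝ => dciE L p.2 - dciE L p.1 :=
        (hE.continuous.comp continuous_snd).sub (hE.continuous.comp continuous_fst)
      exact hc.continuousAt.eventually_ne (sub_ne_zero.2 h)
    have hev : dciQ L g =ᶠ[nhds (s₀, t₀)]
        fun p => (g p.2 - g p.1) / (dciE L p.2 - dciE L p.1) := by
      filter_upwards [hop] with p hp
      unfold dciQ
      rw [if_neg (sub_ne_zero.1 hp)]
    refine ContDiffAt.congr_of_eventuallyEq ?_ hev
    refine dci_div_at ?_ ?_ (sub_ne_zero.2 h)
    · exact ((hg.comp contDiff_snd).sub (hg.comp contDiff_fst)).contDiffAt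
    · exact ((hE.comp contDiff_snd).sub (hE.comp contDiff_fst)).contDiffAt

theorem dciQ_ne {L : ℝ} (hL : 0 < L) {g : ℝ → ℂ} (hd : ∀ s, deriv g s ≠ 0)
    (hinj : ∀ s t, g t = g s → dciE L t = dciE L s) (p : ℝ × ℝ) : dciQ L g p ≠ 0 := by
  unfold dciQ
  split_ifs with h
  · exact div_ne_zero (hd _) (dciE_deriv_ne hL _)
  · exact div_ne_zero (sub_ne_zero.2 fun h' => h (hinj _ _ h')) (sub_ne_zero.2 h)

theorem dciQ_per {L : ℝ} (hL : 0 < L) {g : ℝ → ℂ}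
    (hper : ∀ s, g (s + L) = g s) (s t : ℝ) : dciQ L g (s, t + L) = dciQ L g (s, t) := by
  simp only [dciQ, dciE_per hL, hper]

/-- Partial derivative in the second variable. -/
noncomputable def dciD (f : ℝ × ℝ → ℂ) (p : ℝ × ℝ) : ℂ := fderiv ℝ f p (0, 1)

theorem dciD_smooth {f : ℝ × ℝ → ℂ} (hf : ContDiff ℝ (⊤ : ℕ∞) f) :
    ContDiff ℝ (⊤ : ℕ∞) (dciD f) := by
  have : ContDiff ℝ (⊤ : ℕ∞) (fderiv ℝ f) := hf.fderiv_right (by simp)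
  exact this.clm_apply contDiff_const

theorem dciD_hasDeriv {f : ℝ × ℝ → ℂ} (hf : ContDiff ℝ (⊤ : ℕ∞) f) (s t : ℝ) :
    HasDerivAt (fun t => f (s, t)) (dciD f (s, t)) t := by
  have h1 : HasFDerivAt f (fderiv ℝ f (s, t)) (s, t) :=
    (hf.differentiable (by simp) _).hasFDerivAt
  have h2 : HasDerivAt (fun t : ℝ => (s, t)) ((0 : ℝ), (1 : ℝ)) t :=
    (hasDerivAt_const t s).prodMk (hasDerivAt_id t)
  exact h1.comp_hasDerivAt t h2

theorem dciD_per {L : ℝ} {f : ℝ × ℝ → ℂ} (hf : ContDiff ℝ (⊤ : ℕ∞) f)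
    (hp : ∀ s t, f (s, t + L) = f (s, t)) (s t : ℝ) : dciD f (s, t + L) = dciD f (s, t) := by
  have h1 := (dciD_hasDeriv hf s (t + L)).comp_add_const t L
  simp only [hp] at h1
  exact h1.unique (dciD_hasDeriv hf s t)

/-- The regularised kernel. -/
noncomputable def dciG (L : ℝ) (g : ℝ → ℂ) (p : ℝ × ℝ) : ℂ := dciD (dciQ L g) p / dciQ L g p

/-- The kernel of the circle. -/
noncomputable def dciC (L : ℝ) (x : ℝ) : ℂ := 1 / (1 - dciE L (-x))

theorem dciG_formula {L : ℝ} (hL : 0 < L) {g : ℝ → ℂ} (hg : ContDiff ℝ (⊤ : ℕ∞) g)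
    (hper : ∀ s, g (s + L) = g s)
    (hinj : ∀ s t, g t = g s → dciE L t = dciE L s) (s t : ℝ) (h : dciE L t ≠ dciE L s) :
    deriv g t / (g t - g s) =
      dciG L g (s, t) + ((2 * π / L : ℝ) : ℂ) * Complex.I * dciC L (t - s) := by
  have hE := dciE_smooth L
  have h1 := dciD_hasDeriv (dciQ_smooth hL hg hper) s t
  have hgt : HasDerivAt g (deriv g t) t := (hg.differentiable (by simp) _).hasDerivAt
  have hn1 : g t - g s ≠ 0 := sub_ne_zero.2 fun h' => h (hinj _ _ h')
  have hn2 : dciE L t - dciE L s ≠ 0 := sub_ne_zero.2 h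
  have h2 := (hgt.sub_const (g s)).div ((dciE_hasDeriv L t).sub_const (dciE L s)) hn2
  have hev : (fun t => dciQ L g (s, t)) =ᶠ[nhds t]
      ((fun t => g t - g s) / (fun t => dciE L t - dciE L s)) := by
    have : ∀ᶠ t in nhds t, dciE L t ≠ dciE L s := hE.continuous.continuousAt.eventually_ne h
    filter_upwards [this] with t ht
    simp only [dciQ, if_neg ht, Pi.div_apply]
  have h3 := h1.unique (h2.congr_of_eventuallyEq hev)
  have h4 : dciQ L g (s, t) = (g t - g s) / (dciE L t - dciE L s) := by
    simp only [dciQ, if_neg h]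
  have h5 : dciC L (t - s) = dciE L t / (dciE L t - dciE L s) := by
    unfold dciC
    rw [neg_sub, sub_eq_add_neg s t, dciE_add, dciE_neg]
    have := dciE_ne L t
    have h6 : 1 - dciE L s * (dciE L t)⁻¹ = (dciE L t - dciE L s) / dciE L t := by
      field_simp
    rw [h6, one_div_div]
  rw [dciG, h3, h4, h5]
  field_simp
  ring

theorem dciG_smooth {L : ℝ} (hL : 0 < L) {g : ℝ → ℂ} (hg : ContDiff ℝ (⊤ : ℕ∞) g)
    (hper : ∀ s, g (s + L) = g s) (hd : ∀ s, deriv g s ≠ 0)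
    (hinj : ∀ s t, g t = g s → dciE L t = dciE L s) : ContDiff ℝ (⊤ : ℕ∞) (dciG L g) :=
  contDiff_iff_contDiffAt.2 fun p => dci_div_at
    (dciD_smooth (dciQ_smooth hL hg hper)).contDiffAt (dciQ_smooth hL hg hper).contDiffAt
    (dciQ_ne hL hd hinj p)

theorem dciG_per {L : ℝ} (hL : 0 < L) {g : ℝ → ℂ} (hg : ContDiff ℝ (⊤ : ℕ∞) g)
    (hper : ∀ s, g (s + L) = g s) (s t : ℝ) : dciG L g (s, t + L) = dciG L g (s, t) := by
  simp only [dciG, dciQ_per hL hper, dciD_per (dciQ_smooth hL hg hper) (dciQ_per hL hper)]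

theorem dci_mean_zero {h : ℝ} (hh : 0 < h) (m : ℕ) : ∀ (f : ℕ → ℝ → ℂ) (B : ℝ)
    (_ : ∀ k x, HasDerivAt (f k) (f (k + 1) x) x) (_ : ∀ k x, f k (x + h) = f k x)
    (_ : ∫ x in (0:ℝ)..h, f 0 x = 0) (_ : ∀ x, ‖f m x‖ ≤ B) (x : ℝ), ‖f 0 x‖ ≤ h ^ m * B := by
  induction m with
  | zero => intro f B _ _ _ hB x; simpa using hB x
  | succ m ih =>
    intro f B hd hp hz hB x
    have hcont : ∀ k, Continuous (f k) := fun k =>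
      continuous_iff_continuousAt.2 fun x => (hd k x).continuousAt
    have h1 : ∀ x, ‖f 1 x‖ ≤ h ^ m * B := by
      refine ih (fun k => f (k + 1)) B (fun k x => hd (k + 1) x) (fun k x => hp (k + 1) x) ?_ hB
      have := intervalIntegral.integral_eq_sub_of_hasDerivAt (a := 0) (b := h) (fun x _ => hd 0 x)
        ((hcont 1).intervalIntegrable _ _)
      rw [zero_add] at this ⊢
      rw [this]
      have := hp 0 0
      rw [zero_add] at this
      rw [this, sub_self]
    have h2 : ∫ y in x..(x + h), f 0 y = 0 := by
      have hP : Function.Periodic (f 0) h := hp 0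
      rw [hP.intervalIntegral_add_eq x 0, zero_add, hz]
    have h3 : ∫ y in x..(x + h), (f 0 x - f 0 y) = (h : ℂ) * f 0 x := by
      rw [intervalIntegral.integral_sub (by simp) ((hcont 0).intervalIntegrable _ _), h2]
      simp
    have hlip : ∀ y, ‖f 0 x - f 0 y‖ ≤ h ^ m * B * ‖x - y‖ := fun y =>
      convex_univ.norm_image_sub_le_of_norm_hasDerivWithin_le
        (f' := f 1) (fun z _ => (hd 0 z).hasDerivWithinAt) (fun z _ => h1 z) trivial trivial
    have hB0 : 0 ≤ h ^ m * B := (norm_nonneg _).trans (h1 0)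
    have h4 : ‖∫ y in x..(x + h), (f 0 x - f 0 y)‖ ≤ (h ^ m * B * h) * |x + h - x| := by
      refine intervalIntegral.norm_integral_le_of_norm_le_const fun y hy => ?_
      rw [Set.uIoc_of_le (by linarith)] at hy
      refine (hlip y).trans (mul_le_mul_of_nonneg_left ?_ hB0)
      rw [Real.norm_eq_abs, abs_le]
      constructor <;> linarith [hy.1, hy.2]
    rw [h3, norm_mul, Complex.norm_real, Real.norm_eq_abs, add_sub_cancel_left, abs_of_pos hh,
      mul_comm] at h4
    have h5 := le_of_mul_le_mul_right h4 hh
    rw [pow_succ]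
    linarith

theorem dci_sum_per {E : Type} [AddCommMonoid E] {L : ℝ} {N : ℕ} (hN : 0 < N) {φ : ℝ → E}
    (hφ : ∀ t, φ (t + L) = φ t) (a : ℝ) :
    ∑ j ∈ Finset.range N, φ (a + L / N + j * (L / N)) = ∑ j ∈ Finset.range N, φ (a + j * (L / N)) := by
  obtain ⟨n, rfl⟩ : ∃ n, N = n + 1 := ⟨N - 1, by omega⟩
  rw [Finset.sum_range_succ, Finset.sum_range_succ']
  have hn : ((n + 1 : ℕ) : ℝ) ≠ 0 := by positivity
  congr 1
  · refine Finset.sum_congr rfl fun j _ => ?_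
    congr 1
    push_cast
    ring
  · have : a + L / ((n + 1 : ℕ) : ℝ) + n * (L / ((n + 1 : ℕ) : ℝ)) =
        a + ((0 : ℕ) : ℝ) * (L / ((n + 1 : ℕ) : ℝ)) + L := by
      have : L / ((n + 1 : ℕ) : ℝ) + n * (L / ((n + 1 : ℕ) : ℝ)) = L := by
        field_simp
        push_cast
        ring
      push_cast at this ⊢
      linarith
    rw [this, hφ]

theorem dci_sum_per_nat {E : Type} [AddCommMonoid E] {L : ℝ} {N : ℕ} (hN : 0 < N) {φ : ℝ → E}
    (hφ : ∀ t, φ (t + L) = φ t) (a : ℝ) (k : ℕ) :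
    ∑ j ∈ Finset.range N, φ (a - k * (L / N) + j * (L / N)) =
      ∑ j ∈ Finset.range N, φ (a + j * (L / N)) := by
  have h : Function.Periodic (fun a => ∑ j ∈ Finset.range N, φ (a + j * (L / N))) (L / N) :=
    fun a => dci_sum_per hN hφ a
  exact h.sub_nat_mul_eq k

theorem dci_sum_int {L : ℝ} {N : ℕ} (hN : 0 < N) {φ : ℝ → ℂ} (hc : Continuous φ) :
    ∫ a in (0:ℝ)..(L / N), ∑ j ∈ Finset.range N, φ (a + j * (L / N)) = ∫ t in (0:ℝ)..L, φ t := by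
  rw [intervalIntegral.integral_finsetSum
    (fun j _ => Continuous.intervalIntegrable (by fun_prop) _ _)]
  have := intervalIntegral.sum_integral_adjacent_intervals (f := φ) (μ := volume)
    (a := fun k : ℕ => (k : ℝ) * (L / N)) (n := N) (fun k _ => hc.intervalIntegrable _ _)
  have hn : (N : ℝ) ≠ 0 := by positivity
  rw [mul_div_cancel₀ _ hn, Nat.cast_zero, zero_mul] at this
  rw [← this]
  refine Finset.sum_congr rfl fun j _ => ?_
  rw [intervalIntegral.integral_comp_add_right]
  push_cast
  congr 1 <;> ring

theorem dci_bdd {L : ℝ} (hL : 0 < L) {f : ℝ × ℝ → ℂ} (hc : Continuous f)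
    (hp : ∀ s t, f (s, t + L) = f (s, t)) :
    ∃ B, 0 ≤ B ∧ ∀ s ∈ Set.Icc 0 L, ∀ t, ‖f (s, t)‖ ≤ B := by
  obtain ⟨B, hB⟩ := ((isCompact_Icc (a := (0:ℝ)) (b := L)).prod
    (isCompact_Icc (a := (0:ℝ)) (b := L))).exists_bound_of_continuousOn hc.continuousOn
  have key : ∀ s ∈ Set.Icc 0 L, ∀ t, ‖f (s, t)‖ ≤ B := by
    intro s hs t
    have hP : Function.Periodic (fun t => f (s, t)) L := hp s
    obtain ⟨y, hy, hty⟩ := hP.exists_mem_Ico₀ hL t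
    rw [hty]
    exact hB (s, y) ⟨hs, hy.1, hy.2.le⟩
  exact ⟨B, (norm_nonneg _).trans (key 0 ⟨le_rfl, hL.le⟩ 0), key⟩

theorem dci_trapezoid {L : ℝ} (hL : 0 < L) {f : ℝ × ℝ → ℂ} (hf : ContDiff ℝ (⊤ : ℕ∞) f)
    (hp : ∀ s t, f (s, t + L) = f (s, t)) (hz : ∀ s, ∫ t in (0:ℝ)..L, f (s, t) = 0) (m : ℕ) :
    ∃ B, 0 ≤ B ∧ ∀ N : ℕ, 0 < N → ∀ s ∈ Set.Icc 0 L, ∀ a,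
      ‖∑ j ∈ Finset.range N, f (s, a + j * (L / N))‖ ≤ (L / N) ^ m * (N * B) := by
  have hs : ∀ k, ContDiff ℝ (⊤ : ℕ∞) (dciD^[k] f) ∧
      ∀ s t, (dciD^[k] f) (s, t + L) = (dciD^[k] f) (s, t) := by
    intro k
    induction k with
    | zero => exact ⟨hf, hp⟩
    | succ k ih =>
      rw [Function.iterate_succ_apply']
      exact ⟨dciD_smooth ih.1, dciD_per ih.1 ih.2⟩
  obtain ⟨B, hB0, hB⟩ := dci_bdd hL (hs m).1.continuous (hs m).2
  refine ⟨B, hB0, fun N hN s hsI a => ?_⟩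
  have hNR : (0:ℝ) < N := by exact_mod_cast hN
  refine dci_mean_zero (div_pos hL hNR) m
    (fun k a => ∑ j ∈ Finset.range N, (dciD^[k] f) (s, a + j * (L / N))) (N * B) ?_ ?_ ?_ ?_ a
  · intro k x
    refine HasDerivAt.fun_sum fun j _ => ?_
    have := dciD_hasDeriv (hs k).1 s (x + j * (L / N))
    rw [Function.iterate_succ_apply']
    exact this.comp_add_const x _
  · intro k x
    exact dci_sum_per hN (φ := fun t => (dciD^[k] f) (s, t)) ((hs k).2 s) x
  · rw [← hz s]
    exact dci_sum_int hN (φ := fun t => f (s, t)) (hf.continuous.comp (by fun_prop))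
  · intro x
    refine (norm_sum_le _ _).trans ?_
    refine (Finset.sum_le_sum fun j _ => hB s hsI _).trans ?_
    simp

theorem dciC_re (L x : ℝ) (h : dciE L x ≠ 1) : (dciC L x).re = 1 / 2 := by
  have hn : Complex.normSq (dciE L x) = 1 := by
    rw [Complex.normSq_eq_norm_sq, dciE_norm, one_pow]
  have hE := dciE_ne L x
  have h1 : dciC L x = dciE L x / (dciE L x - 1) := by
    unfold dciC
    rw [dciE_neg]
    have : 1 - (dciE L x)⁻¹ = (dciE L x - 1) / dciE L x := by field_simp
    rw [this, one_div_div]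
  have h2 : (dciE L x).re ≠ 1 := by
    intro hr
    apply h
    rw [Complex.normSq_apply, hr] at hn
    have : (dciE L x).im = 0 := by nlinarith
    exact Complex.ext hr this
  rw [h1, Complex.div_re]
  rw [Complex.normSq_apply] at hn
  have h3 : Complex.normSq (dciE L x - 1) = 2 * (1 - (dciE L x).re) := by
    rw [Complex.normSq_apply]
    simp only [Complex.sub_re, Complex.sub_im, Complex.one_re, Complex.one_im]
    linarith
  rw [h3]
  have h4 : 1 - (dciE L x).re ≠ 0 := fun h0 => h2 (by linarith)
  simp only [Complex.sub_re, Complex.sub_im, Complex.one_re, Complex.one_im]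
  field_simp
  linarith

theorem dci_int_exp {L : ℝ} (hL : 0 < L) {g : ℝ → ℂ} (hg : ContDiff ℝ (⊤ : ℕ∞) g)
    (hper : ∀ s, g (s + L) = g s) (hd : ∀ s, deriv g s ≠ 0)
    (hinj : ∀ s t, g t = g s → dciE L t = dciE L s) (s : ℝ) :
    ∃ n : ℤ, ∫ t in (0:ℝ)..L, dciG L g (s, t) = n * (2 * π * Complex.I) := by
  rw [← Complex.exp_eq_one_iff]
  have hGc : Continuous fun t => dciG L g (s, t) :=
    (dciG_smooth hL hg hper hd hinj).continuous.comp (by fun_prop)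
  have hQ : ∀ t, HasDerivAt (fun t => dciQ L g (s, t)) (dciD (dciQ L g) (s, t)) t :=
    dciD_hasDeriv (dciQ_smooth hL hg hper) s
  have hI : ∀ t, HasDerivAt (fun x => ∫ t in (0:ℝ)..x, dciG L g (s, t)) (dciG L g (s, t)) t :=
    fun t => hGc.integral_hasStrictDerivAt 0 t |>.hasDerivAt
  have hprod : ∀ t, HasDerivAt (fun x => Complex.exp (-∫ t in (0:ℝ)..x, dciG L g (s, t)) * dciQ L g (s, x)) 0 t := by
    intro t
    have := (hI t).neg.cexp.mul (hQ t)
    refine HasDerivAt.congr_deriv this ?_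
    have hq := dciQ_ne hL hd hinj (s, t)
    simp only [dciG]
    field_simp
    simp
  have hconst := is_const_of_deriv_eq_zero (fun t => (hprod t).differentiableAt)
    (fun t => (hprod t).deriv) L 0
  have hp := dciQ_per hL hper s 0
  rw [zero_add] at hp
  have hq := dciQ_ne hL hd hinj (s, 0)
  simp only [hp, intervalIntegral.integral_same, neg_zero, Complex.exp_zero] at hconst
  have h1 := mul_right_cancel₀ hq hconst
  rw [Complex.exp_neg] at h1
  exact inv_eq_one.1 h1

theorem dci_int_const {L : ℝ} (hL : 0 < L) {g : ℝ → ℂ} (hg : ContDiff ℝ (⊤ : ℕ∞) g)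
    (hper : ∀ s, g (s + L) = g s) (hd : ∀ s, deriv g s ≠ 0)
    (hinj : ∀ s t, g t = g s → dciE L t = dciE L s) :
    ∃ n : ℤ, ∀ s, ∫ t in (0:ℝ)..L, dciG L g (s, t) = n * (2 * π * Complex.I) := by
  choose n hn using dci_int_exp hL hg hper hd hinj
  have hJ : Continuous fun s => ∫ t in (0:ℝ)..L, dciG L g (s, t) :=
    intervalIntegral.continuous_parametric_intervalIntegral_of_continuous'
      (f := fun s t => dciG L g (s, t)) (dciG_smooth hL hg hper hd hinj).continuous 0 L
  have hpi := Real.pi_pos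
  have hn' : Continuous fun s => ((n s : ℤ) : ℝ) := by
    have h1 : Continuous fun s => (∫ t in (0:ℝ)..L, dciG L g (s, t)).im / (2 * π) :=
      (Complex.continuous_im.comp hJ).div_const _
    convert h1 using 2 with s
    rw [hn s]
    have : (n s : ℂ) * (2 * π * Complex.I) = ((n s * (2 * π) : ℝ) : ℂ) * Complex.I := by
      push_cast; ring
    rw [this]
    simp
  have hnc : Continuous n := Int.isClosedEmbedding_coe_real.isEmbedding.continuous_iff.2 hn'
  refine ⟨n 0, fun s => ?_⟩
  rw [hn s, PreconnectedSpace.constant inferInstance hnc (x := s) (y := 0)]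

theorem dci_nearest {L : ℝ} (hL : 0 < L) {g : ℝ → ℂ} (hg : ContDiff ℝ (⊤ : ℕ∞) g)
    (hper : ∀ s, g (s + L) = g s) (hd : ∀ s, deriv g s ≠ 0)
    (hinj : ∀ s t, g t = g s → dciE L t = dciE L s) (z : ℂ) (hz : ∀ t, g t ≠ z) (s : ℝ)
    (hs : ∀ t, ‖g s - z‖ ≤ ‖g t - z‖) :
    |(∫ t in (0:ℝ)..L, deriv g t / (g t - z)).im - (∫ t in (0:ℝ)..L, dciG L g (s, t)).im - π|
      ≤ π := by
  have hpi := Real.pi_pos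
  have hGc : Continuous fun t => dciG L g (s, t) :=
    (dciG_smooth hL hg hper hd hinj).continuous.comp (by fun_prop)
  have hdc : Continuous (deriv g) := (contDiff_infty_iff_deriv.1 hg).2.continuous
  have hFc : Continuous fun t => deriv g t / (g t - z) :=
    hdc.div (hg.continuous.sub continuous_const) fun t => sub_ne_zero.2 (hz t)
  set K : ℝ → ℝ := fun t => (deriv g t / (g t - z)).im - (dciG L g (s, t)).im - π / L with hK
  have hKc : Continuous K :=
    ((Complex.continuous_im.comp hFc).sub (Complex.continuous_im.comp hGc)).sub continuous_const
  set Λ : ℝ → ℂ := fun t => Complex.log ((g t - z) / (g t - g s)) with hΛ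
  have hre : ∀ t, dciE L t ≠ dciE L s → 0 < ((g t - z) / (g t - g s)).re := by
    intro t ht
    have hu : g t - g s ≠ 0 := sub_ne_zero.2 fun h => ht (hinj _ _ h)
    set u := g t - g s
    have h1 : g t - z = u - (z - g s) := by simp only [u]; ring
    have h2 := hs t
    rw [h1, norm_sub_rev (g s) z] at h2
    rw [h1]
    set v := z - g s
    have h3 : (u - v) / u = 1 - v / u := by field_simp
    rw [h3]
    have hpos : 0 < ‖u‖ := norm_pos_iff.2 hu
    have h4 : ‖v / u‖ ≤ ‖1 - v / u‖ := by
      rw [← h3, norm_div, norm_div]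
      gcongr
    have h5 : Complex.normSq (v / u) ≤ Complex.normSq (1 - v / u) := by
      rw [Complex.normSq_eq_norm_sq, Complex.normSq_eq_norm_sq]
      gcongr
    rw [Complex.normSq_apply, Complex.normSq_apply] at h5
    simp only [Complex.sub_re, Complex.sub_im, Complex.one_re, Complex.one_im] at h5 ⊢
    nlinarith
  have hder : ∀ t, dciE L t ≠ dciE L s → HasDerivAt (fun t => (Λ t).im) (K t) t := by
    intro t ht
    have hu : g t - g s ≠ 0 := sub_ne_zero.2 fun h => ht (hinj _ _ h)
    have hv : g t - z ≠ 0 := sub_ne_zero.2 (hz t)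
    have hgt : HasDerivAt g (deriv g t) t := (hg.differentiable (by simp) _).hasDerivAt
    have h1 := ((hgt.sub_const z).div (hgt.sub_const (g s)) hu).clog_real (Or.inl (hre t ht))
    have h2 := Complex.imCLM.hasFDerivAt.comp_hasDerivAt t h1
    refine HasDerivAt.congr_deriv h2 ?_
    have h3 := dciG_formula hL hg hper hinj s t ht
    have h4 : dciE L (t - s) ≠ 1 := by
      intro h
      apply ht
      have := dciE_add L s (t - s)
      rw [h, mul_one, add_sub_cancel] at this
      exact this
    have h5 := dciC_re L _ h4
    have h6 : (deriv g t * (g t - g s) - (g t - z) * deriv g t) / (g t - g s) ^ 2 /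
        ((fun t => g t - z) t / (fun t => g t - g s) t) = deriv g t / (g t - z) - deriv g t / (g t - g s) := by
      simp only
      field_simp
    have h7 : (((2 * π / L : ℝ) : ℂ) * Complex.I * dciC L (t - s)).im = π / L := by
      rw [mul_assoc, Complex.im_ofReal_mul, Complex.I_mul_im, h5]
      ring
    simp only [Pi.div_apply] at h6 ⊢
    rw [h6, h3, Complex.imCLM_apply, Complex.sub_im, Complex.add_im, h7, hK]
    simp only
    ring
  have hbd : ∀ t, dciE L t ≠ dciE L s → |(Λ t).im| ≤ π / 2 := by
    intro t ht
    rw [hΛ, Complex.log_im]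
    exact Complex.abs_arg_le_pi_div_two_iff.2 (hre t ht).le
  have hne : ∀ t ∈ Set.Ioo s (s + L), dciE L t ≠ dciE L s := by
    intro t ht h
    obtain ⟨k, rfl⟩ := (dciE_eq_iff hL _ _).1 h
    have h1 : 0 < (k : ℝ) * L := by linarith [ht.1]
    have h2 : (k : ℝ) * L < 1 * L := by linarith [ht.2]
    have h3 : (0 : ℝ) < k := pos_of_mul_pos_left h1 hL.le
    have h4 : (k : ℝ) < 1 := lt_of_mul_lt_mul_right h2 hL.le
    have h5 : 0 < k := by exact_mod_cast h3
    have h6 : k < 1 := by exact_mod_cast h4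
    omega
  have hint : ∀ δ ∈ Set.Ioo 0 (L / 2), |∫ t in (s + δ)..(s + L - δ), K t| ≤ π := by
    intro δ hδ
    have hsub : ∀ t ∈ Set.uIcc (s + δ) (s + L - δ), t ∈ Set.Ioo s (s + L) := by
      intro t ht
      rw [Set.uIcc_of_le (by linarith [hδ.2])] at ht
      exact ⟨by linarith [ht.1, hδ.1], by linarith [ht.2, hδ.1]⟩
    rw [intervalIntegral.integral_eq_sub_of_hasDerivAt
      (fun t ht => hder t (hne t (hsub t ht))) (hKc.intervalIntegrable _ _)]
    have b1 := hbd _ (hne _ (hsub _ Set.right_mem_uIcc))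
    have b2 := hbd _ (hne _ (hsub _ Set.left_mem_uIcc))
    rw [abs_le] at b1 b2 ⊢
    constructor <;> linarith [b1.1, b1.2, b2.1, b2.2]
  have hlim : |∫ t in s..(s + L), K t| ≤ π := by
    have hc : Continuous fun δ : ℝ => |∫ t in (s + δ)..(s + L - δ), K t| := by
      have h1 : Continuous fun x => ∫ t in (0:ℝ)..x, K t :=
        intervalIntegral.continuous_primitive (fun a b => hKc.intervalIntegrable a b) 0
      have h2 : (fun δ : ℝ => |∫ t in (s + δ)..(s + L - δ), K t|) =
          fun δ => |(∫ t in (0:ℝ)..(s + L - δ), K t) - ∫ t in (0:ℝ)..(s + δ), K t| := by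
        funext δ
        rw [intervalIntegral.integral_interval_sub_left] <;> exact hKc.intervalIntegrable _ _
      rw [h2]
      exact ((h1.comp (by fun_prop : Continuous fun δ : ℝ => s + L - δ)).sub
        (h1.comp (by fun_prop : Continuous fun δ : ℝ => s + δ))).abs
    have ht := (hc.tendsto 0).mono_left (nhdsWithin_le_nhds (s := Set.Ioi 0))
    simp only [add_zero, sub_zero] at ht
    refine le_of_tendsto ht ?_
    filter_upwards [Ioo_mem_nhdsGT (half_pos hL)] with δ hδ using hint δ hδ
  have hKper : Function.Periodic K L := by
    intro t
    have hdp : deriv g (t + L) = deriv g t := by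
      have h1 : HasDerivAt g (deriv g (t + L)) (t + L) := (hg.differentiable (by simp) _).hasDerivAt
      have h2 := h1.comp_add_const t L
      simp only [hper] at h2
      exact h2.deriv.symm
    simp only [hK, hdp, hper, dciG_per hL hg hper]
  rw [hKper.intervalIntegral_add_eq s 0, zero_add] at hlim
  have i1 := Complex.imCLM.intervalIntegral_comp_comm (hFc.intervalIntegrable 0 L (μ := volume))
  have i2 := Complex.imCLM.intervalIntegral_comp_comm (hGc.intervalIntegrable 0 L (μ := volume))
  simp only [Complex.imCLM_apply] at i1 i2
  rw [← i1, ← i2]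
  have c1 : IntervalIntegrable (fun t => (deriv g t / (g t - z)).im) volume 0 L :=
    (Complex.continuous_im.comp hFc).intervalIntegrable 0 L
  have c2 : IntervalIntegrable (fun t => (dciG L g (s, t)).im) volume 0 L :=
    (Complex.continuous_im.comp hGc).intervalIntegrable 0 L
  simp only [hK] at hlim
  rw [intervalIntegral.integral_sub (c1.sub c2) (by simp), intervalIntegral.integral_sub c1 c2] at hlim
  simp only [intervalIntegral.integral_const, sub_zero, smul_eq_mul, mul_div_cancel₀ _ hL.ne'] at hlim
  exact hlim

theorem dci_inj {L : ℝ} (hL : 0 < L) {g : ℝ → ℂ} (hper : ∀ s, g (s + L) = g s)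
    (hinj : Set.InjOn g (Set.Ico 0 L)) (s t : ℝ) (h : g t = g s) : dciE L t = dciE L s := by
  have hP : Function.Periodic (fun t => (g t, dciE L t)) L := fun t => by
    simp only [hper, dciE_per hL]
  obtain ⟨t', ht', e1⟩ := hP.exists_mem_Ico₀ hL t
  obtain ⟨s', hs', e2⟩ := hP.exists_mem_Ico₀ hL s
  simp only [Prod.mk.injEq] at e1 e2
  rw [e1.1, e2.1] at h
  rw [e1.2, e2.2, hinj ht' hs' h]

theorem dci_exists_nearest {L : ℝ} (hL : 0 < L) {g : ℝ → ℂ} (hc : Continuous g)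
    (hper : ∀ s, g (s + L) = g s) (z : ℂ) : ∃ s, ∀ t, ‖g s - z‖ ≤ ‖g t - z‖ := by
  obtain ⟨s, _, hs⟩ := (isCompact_Icc (a := (0:ℝ)) (b := L)).exists_isMinOn
    ⟨0, le_rfl, hL.le⟩ (hc.sub continuous_const : Continuous fun t => g t - z).norm.continuousOn
  refine ⟨s, fun t => ?_⟩
  have hP : Function.Periodic g L := hper
  obtain ⟨y, hy, hty⟩ := hP.exists_mem_Ico₀ hL t
  rw [hty]
  exact hs (⟨hy.1, hy.2.le⟩ : y ∈ Set.Icc 0 L)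

theorem dci_int_zero {L : ℝ} (hL : 0 < L) {g : ℝ → ℂ} (hg : ContDiff ℝ (⊤ : ℕ∞) g)
    (hper : ∀ s, g (s + L) = g s) (harc : ∀ s, ‖deriv g s‖ = 1)
    (hinj : ∀ s t, g t = g s → dciE L t = dciE L s)
    (horient : ∃ z₀ : ℂ, (∀ s, g s ≠ z₀) ∧
      (∫ t in (0:ℝ)..L, deriv g t / (g t - z₀)) = 2 * (π : ℂ) * Complex.I) (s : ℝ) :
    ∫ t in (0:ℝ)..L, dciG L g (s, t) = 0 := by
  have hpi := Real.pi_gt_three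
  have hd : ∀ s, deriv g s ≠ 0 := fun s h => by
    have := harc s
    rw [h, norm_zero] at this
    exact zero_ne_one this
  obtain ⟨n, hn⟩ := dci_int_const hL hg hper hd hinj
  have him : ∀ s, (∫ t in (0:ℝ)..L, dciG L g (s, t)).im = n * (2 * π) := by
    intro s
    rw [hn s]
    have : (n : ℂ) * (2 * π * Complex.I) = ((n * (2 * π) : ℝ) : ℂ) * Complex.I := by
      push_cast; ring
    rw [this]
    simp
  -- lower bound
  have hn0 : 0 ≤ n := by
    obtain ⟨z₀, hz, hI⟩ := horient
    obtain ⟨s, hs⟩ := dci_exists_nearest hL hg.continuous hper z₀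
    have h1 := dci_nearest hL hg hper hd hinj z₀ hz s hs
    rw [him, hI, abs_le] at h1
    have h2 : (2 * (π : ℂ) * Complex.I).im = 2 * π := by simp
    rw [h2] at h1
    have h3 : (-1 : ℝ) < n := by nlinarith [h1.2]
    have h4 : (-1 : ℤ) < n := by exact_mod_cast h3
    omega
  have hn1 : n ≤ 0 := by
    obtain ⟨B, hB⟩ := (isCompact_Icc (a := (0:ℝ)) (b := L)).exists_bound_of_continuousOn
      hg.continuous.continuousOn
    have hB' : ∀ t, ‖g t‖ ≤ B := by
      intro t
      have hP : Function.Periodic g L := hper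
      obtain ⟨y, hy, hty⟩ := hP.exists_mem_Ico₀ hL t
      rw [hty]
      exact hB y ⟨hy.1, hy.2.le⟩
    have hB0 : 0 ≤ B := (norm_nonneg _).trans (hB' 0)
    set z : ℂ := ((B + L : ℝ) : ℂ) with hzdef
    have hfar : ∀ t, L ≤ ‖g t - z‖ := by
      intro t
      have h1 := norm_sub_norm_le z (g t)
      have h2 : ‖z‖ = B + L := by
        rw [hzdef, Complex.norm_real, Real.norm_eq_abs, abs_of_nonneg (by linarith)]
      rw [norm_sub_rev] at h1
      linarith [hB' t]
    have hz : ∀ t, g t ≠ z := by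
      intro t h
      have := hfar t
      rw [h, sub_self, norm_zero] at this
      linarith
    obtain ⟨s, hs⟩ := dci_exists_nearest hL hg.continuous hper z
    have h1 := dci_nearest hL hg hper hd hinj z hz s hs
    have h2 : ‖∫ t in (0:ℝ)..L, deriv g t / (g t - z)‖ ≤ 1 / L * |L - 0| := by
      refine intervalIntegral.norm_integral_le_of_norm_le_const fun t _ => ?_
      rw [norm_div, harc]
      exact one_div_le_one_div_of_le hL (hfar t)
    rw [sub_zero, abs_of_pos hL, one_div, inv_mul_cancel₀ hL.ne'] at h2
    have h3 := (Complex.abs_im_le_norm _).trans h2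
    rw [him, abs_le] at h1
    rw [abs_le] at h3
    have h4 : (n : ℝ) < 1 := by nlinarith [h1.1, h3.2]
    have h5 : n < 1 := by exact_mod_cast h4
    omega
  have : n = 0 := le_antisymm hn1 hn0
  rw [hn s, this]
  simp

theorem dciC_per {L : ℝ} (hL : 0 < L) (x : ℝ) : dciC L (x + L) = dciC L x := by
  unfold dciC
  have := dciE_per hL (-(x + L))
  rw [← this]
  congr 3
  ring

theorem dciC_symm (L x : ℝ) (h : dciE L (-x) ≠ 1) : dciC L x + dciC L (-x) = 1 := by
  unfold dciC
  have hE := dciE_ne L x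
  rw [neg_neg]
  rw [dciE_neg] at h ⊢
  have h1 : dciE L x ≠ 1 := fun h' => h (by rw [h', inv_one])
  have h2 : 1 - dciE L x ≠ 0 := sub_ne_zero.2 h1.symm
  have h4 : dciE L x - 1 ≠ 0 := sub_ne_zero.2 h1
  have h3 : 1 - (dciE L x)⁻¹ = (dciE L x - 1) / dciE L x := by field_simp
  rw [h3, one_div_div, ← neg_sub (dciE L x) 1]
  field_simp
  ring

theorem dci_d_lower {L : ℝ} (hL : 0 < L) {N j : ℕ} (hj : j < N) :
    4 * (min ((j : ℝ) + 1 / 2) (N - ((j : ℝ) + 1 / 2))) / N ≤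
      ‖1 - dciE L (-(((j : ℝ) + 1 / 2) * (L / N)))‖ := by
  have hN : (0 : ℝ) < N := by exact_mod_cast (by omega : 0 < N)
  have hjN : (j : ℝ) + 1 ≤ N := by exact_mod_cast hj
  have hpi := Real.pi_pos
  set a : ℝ := (j : ℝ) + 1 / 2 with ha
  have ha0 : 0 < a := by positivity
  have haN : 0 < N - a := by linarith
  have h1 : ‖1 - dciE L (-(a * (L / N)))‖ = 2 * Real.sin (π * a / N) := by
    have h2 : dciE L (-(a * (L / N))) = Complex.exp (Complex.I * ((-(2 * (π * a / N)) : ℝ) : ℂ)) := by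
      unfold dciE
      rw [mul_comm]
      congr 3
      field_simp
    rw [norm_sub_rev, h2, Complex.norm_exp_I_mul_ofReal_sub_one, Real.norm_eq_abs]
    have h3 : -(2 * (π * a / N)) / 2 = -(π * a / N) := by ring
    have h4 : 0 ≤ Real.sin (π * a / N) := by
      apply Real.sin_nonneg_of_nonneg_of_le_pi (by positivity)
      rw [div_le_iff₀ hN]
      nlinarith
    rw [h3, Real.sin_neg, mul_neg, abs_neg, abs_of_nonneg (by positivity)]
  rw [h1]
  rcases le_total a (N - a) with h | h
  · rw [min_eq_left h]
    have := Real.mul_le_sin (x := π * a / N) (by positivity) (by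
      rw [div_le_div_iff₀ hN two_pos]; nlinarith)
    have e : 2 / π * (π * a / N) = 2 * a / N := by field_simp
    rw [e] at this
    have e2 : 4 * a / (N : ℝ) = 2 * (2 * a / N) := by ring
    rw [e2]
    linarith
  · rw [min_eq_right h]
    have := Real.mul_le_sin (x := π * (N - a) / N) (by positivity) (by
      rw [div_le_div_iff₀ hN two_pos]; nlinarith)
    have e : 2 / π * (π * (N - a) / N) = 2 * (N - a) / N := by field_simp
    have e3 : π * (N - a) / N = π - π * a / N := by field_simp
    rw [e, e3, Real.sin_pi_sub] at this
    have e2 : 4 * (N - a) / (N : ℝ) = 2 * (2 * (N - a) / N) := by ring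
    rw [e2]
    linarith

theorem dci_d_lower' {L : ℝ} (hL : 0 < L) {N j : ℕ} (hj : j < N) :
    2 / (N : ℝ) ≤ ‖1 - dciE L (-(((j : ℝ) + 1 / 2) * (L / N)))‖ := by
  have hN : (0 : ℝ) < N := by exact_mod_cast (by omega : 0 < N)
  have hjN : (j : ℝ) + 1 ≤ N := by exact_mod_cast hj
  refine le_trans ?_ (dci_d_lower hL hj)
  gcongr
  have : (1 / 2 : ℝ) ≤ min ((j : ℝ) + 1 / 2) (N - ((j : ℝ) + 1 / 2)) :=
    le_min (by linarith [(Nat.cast_nonneg j : (0:ℝ) ≤ j)]) (by linarith)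
  linarith

theorem dci_sum_inv_sq (n : ℕ) : ∑ j ∈ Finset.range (n + 1), 1 / ((j : ℝ) + 1 / 2) ^ 2 ≤
    5 - 1 / ((n : ℝ) + 1) := by
  induction n with
  | zero => norm_num
  | succ n ih =>
    rw [Finset.sum_range_succ]
    have h1 : 1 / (((n + 1 : ℕ) : ℝ) + 1 / 2) ^ 2 ≤ 1 / ((n : ℝ) + 1) - 1 / (((n + 1 : ℕ) : ℝ) + 1) := by
      push_cast
      have : 1 / ((n : ℝ) + 1) - 1 / ((n : ℝ) + 1 + 1) = 1 / (((n : ℝ) + 1) * ((n : ℝ) + 1 + 1)) := by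
        field_simp
        ring
      rw [this]
      apply one_div_le_one_div_of_le (by positivity)
      nlinarith
    linarith

theorem dci_sum_d {L : ℝ} (hL : 0 < L) {N : ℕ} (hN : 0 < N) :
    ∑ j ∈ Finset.range N, 1 / ‖1 - dciE L (-(((j : ℝ) + 1 / 2) * (L / N)))‖ ^ 2 ≤ (N : ℝ) ^ 2 := by
  have hNR : (0 : ℝ) < N := by exact_mod_cast hN
  have h5 : ∑ j ∈ Finset.range N, 1 / ((j : ℝ) + 1 / 2) ^ 2 ≤ 5 := by
    obtain ⟨n, rfl⟩ : ∃ n, N = n + 1 := ⟨N - 1, by omega⟩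
    have := dci_sum_inv_sq n
    have h0 : 0 ≤ 1 / ((n : ℝ) + 1) := by positivity
    linarith
  have h6 : ∑ j ∈ Finset.range N, 1 / ((N : ℝ) - ((j : ℝ) + 1 / 2)) ^ 2 ≤ 5 := by
    rw [← Finset.sum_range_reflect]
    refine le_of_eq_of_le (Finset.sum_congr rfl fun j hj => ?_) h5
    have hj' := Finset.mem_range.1 hj
    have : ((N - 1 - j : ℕ) : ℝ) = N - 1 - j := by
      rw [Nat.cast_sub (by omega), Nat.cast_sub (by omega)]
      simp
    rw [this]
    congr 2
    ring
  have h7 : ∀ j ∈ Finset.range N, 1 / ‖1 - dciE L (-(((j : ℝ) + 1 / 2) * (L / N)))‖ ^ 2 ≤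
      (N : ℝ) ^ 2 / 16 * (1 / ((j : ℝ) + 1 / 2) ^ 2 + 1 / ((N : ℝ) - ((j : ℝ) + 1 / 2)) ^ 2) := by
    intro j hj
    have hj' := Finset.mem_range.1 hj
    have hjN : (j : ℝ) + 1 ≤ N := by exact_mod_cast hj'
    have hl := dci_d_lower hL hj'
    set a : ℝ := (j : ℝ) + 1 / 2 with ha
    have ha0 : 0 < a := by positivity
    have haN : 0 < N - a := by linarith
    have hm : 0 < min a (N - a) := lt_min ha0 haN
    have h8 : 1 / ‖1 - dciE L (-(a * (L / N)))‖ ^ 2 ≤ 1 / (4 * min a (N - a) / N) ^ 2 :=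
      one_div_le_one_div_of_le (by positivity) (by gcongr)
    have h9 : 1 / (4 * min a (N - a) / N) ^ 2 = (N : ℝ) ^ 2 / 16 * (1 / (min a (N - a)) ^ 2) := by
      field_simp
      norm_num
    refine h8.trans ?_
    rw [h9]
    gcongr
    have p1 : 0 ≤ 1 / a ^ 2 := by positivity
    have p2 : 0 ≤ 1 / (N - a) ^ 2 := by positivity
    rcases min_choice a (N - a) with h | h <;> rw [h] <;> linarith
  refine (Finset.sum_le_sum h7).trans ?_
  rw [← Finset.mul_sum, Finset.sum_add_distrib]
  have : (0:ℝ) < (N : ℝ) ^ 2 / 16 := by positivity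
  nlinarith

theorem dci_sum_C {L : ℝ} (hL : 0 < L) {N : ℕ} (hN : 0 < N) :
    ∑ j ∈ Finset.range N, dciC L (((j : ℝ) + 1 / 2) * (L / N)) = (N : ℂ) / 2 := by
  have hNR : (0 : ℝ) < N := by exact_mod_cast hN
  set S := ∑ j ∈ Finset.range N, dciC L (((j : ℝ) + 1 / 2) * (L / N)) with hS
  have h1 : S = ∑ j ∈ Finset.range N, dciC L (-(((j : ℝ) + 1 / 2) * (L / N))) := by
    rw [hS, ← Finset.sum_range_reflect]
    refine Finset.sum_congr rfl fun j hj => ?_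
    have hj' := Finset.mem_range.1 hj
    have : ((N - 1 - j : ℕ) : ℝ) = N - 1 - j := by
      rw [Nat.cast_sub (by omega), Nat.cast_sub (by omega)]
      simp
    rw [this, ← dciC_per hL (-(((j : ℝ) + 1 / 2) * (L / N)))]
    congr 1
    field_simp
    ring
  have h2 : S + S = N := by
    nth_rewrite 2 [h1]
    rw [hS, ← Finset.sum_add_distrib]
    rw [Finset.sum_congr rfl (g := fun _ => (1 : ℂ))]
    · simp
    · intro j hj
      apply dciC_symm
      intro h
      have := dci_d_lower' hL (Finset.mem_range.1 hj)
      rw [h, sub_self, norm_zero] at this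
      have : 0 < 2 / (N : ℝ) := by positivity
      linarith
  linear_combination h2 / 2

theorem dci_pert {L : ℝ} (hL : 0 < L) {N : ℕ} (hN : 0 < N) {x y η : ℝ}
    (hd : 2 / (N : ℝ) ≤ ‖1 - dciE L (-x)‖) (hη : 2 * π / L * η ≤ 1 / N) (hxy : |y - x| ≤ η) :
    dciE L (-y) ≠ 1 ∧
    ‖dciC L y - dciC L x‖ ≤ 2 * π / L * η * 2 * (1 / ‖1 - dciE L (-x)‖ ^ 2) := by
  have hNR : (0 : ℝ) < N := by exact_mod_cast hN
  have hpi := Real.pi_pos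
  have h0 : ‖dciE L (-y) - dciE L (-x)‖ ≤ 2 * π / L * η := by
    have e1 : dciE L (-y) = dciE L (-x) * dciE L (x - y) := by
      rw [← dciE_add]; congr 1; ring
    have e2 : dciE L (x - y) = Complex.exp (Complex.I * ((2 * π / L * (x - y) : ℝ) : ℂ)) := by
      unfold dciE
      rw [mul_comm]
    rw [e1, ← mul_sub_one, norm_mul, dciE_norm, one_mul, e2]
    refine Real.norm_exp_I_mul_ofReal_sub_one_le.trans ?_
    rw [Real.norm_eq_abs, abs_mul, abs_of_pos (by positivity), abs_sub_comm]
    gcongr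
  set d := ‖1 - dciE L (-x)‖ with hdd
  have hd0 : 0 < d := lt_of_lt_of_le (by positivity) hd
  have h1 : d / 2 ≤ ‖1 - dciE L (-y)‖ := by
    have h2 : (1 - dciE L (-x)) = (1 - dciE L (-y)) + (dciE L (-y) - dciE L (-x)) := by ring
    have h3 : d ≤ ‖1 - dciE L (-y)‖ + ‖dciE L (-y) - dciE L (-x)‖ := by
      rw [hdd]
      nth_rewrite 1 [h2]
      exact norm_add_le _ _
    have h4 : 2 / (N : ℝ) = 2 * (1 / N) := by ring
    rw [h4] at hd
    linarith
  have hy0 : 0 < ‖1 - dciE L (-y)‖ := by linarith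
  have hyn : 1 - dciE L (-y) ≠ 0 := norm_pos_iff.1 hy0
  have hxn : 1 - dciE L (-x) ≠ 0 := norm_pos_iff.1 hd0
  refine ⟨fun h => hyn (by rw [h, sub_self]), ?_⟩
  have h5 : dciC L y - dciC L x = (dciE L (-y) - dciE L (-x)) / ((1 - dciE L (-y)) * (1 - dciE L (-x))) := by
    unfold dciC
    field_simp
    ring
  rw [h5, norm_div, norm_mul, ← hdd]
  have hη0 : 0 ≤ η := (abs_nonneg _).trans hxy
  calc _ ≤ (2 * π / L * η) / (d / 2 * d) := by gcongr
    _ = _ := by field_simp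

theorem dci_d_shift {L : ℝ} (hL : 0 < L) {N j k : ℕ} (hj : j < N) (hk : k < N) :
    2 / (N : ℝ) ≤ ‖1 - dciE L (-(1 / 2 * (L / N) - k * (L / N) + j * (L / N)))‖ := by
  have hN : (0 : ℝ) < N := by exact_mod_cast (by omega : 0 < N)
  rcases le_or_gt k j with h | h
  · have := dci_d_lower' hL (by omega : j - k < N)
    rw [Nat.cast_sub h] at this
    convert this using 5
    ring
  · have := dci_d_lower' hL (by omega : j + N - k < N)
    rw [Nat.cast_sub (by omega), Nat.cast_add, ← dciE_per hL] at this
    convert this using 5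
    field_simp
    ring

theorem discretized_cauchy_integral
    (L : ℝ) (hL : 0 < L) (l : ℝ → ℂ)
    (hsm : ContDiff ℝ (⊤ : ℕ∞) l) (hper : ∀ s, l (s + L) = l s)
    (harc : ∀ s, ‖deriv l s‖ = 1) (hinj : Set.InjOn l (Set.Ico 0 L))
    (horient : ∃ z₀ : ℂ, (∀ s, l s ≠ z₀) ∧
      (∫ t in (0:ℝ)..L, deriv l t / (l t - z₀)) = 2 * (π : ℂ) * Complex.I)
    (κ : ℕ) (hκ : 2 ≤ κ) (M : ℝ) (hM : 0 < M)
    (ms mst : (N : ℕ) → Fin N → ℝ)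
    (hms : ∀ N, 2 ≤ N → ∀ i : Fin N, ms N i ∈ Set.Ico (0:ℝ) L ∧
      |ms N i - ((i : ℕ) : ℝ) * L / (N : ℝ)| ≤ M / (N : ℝ) ^ (κ + 1))
    (hmst : ∀ N, 2 ≤ N → ∀ i : Fin N, mst N i ∈ Set.Ico (0:ℝ) L ∧
      |mst N i - (((i : ℕ) : ℝ) + 1/2) * L / (N : ℝ)| ≤ M / (N : ℝ) ^ (κ + 1)) :
    ∃ C > 0, ∃ N₀ : ℕ, ∀ N : ℕ, N₀ ≤ N → ∀ k : Fin N,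
      ‖(((L / (N : ℝ)) : ℝ) : ℂ) *
          ∑ j : Fin N, deriv l (mst N j) / (l (mst N j) - l (ms N k))
        - (π : ℂ) * Complex.I‖ ≤ C / (N : ℝ) ^ κ := by
  have hpi := Real.pi_pos
  have hd : ∀ s, deriv l s ≠ 0 := fun s h => by
    have := harc s
    rw [h, norm_zero] at this
    exact zero_ne_one this
  have hinj' := dci_inj hL hper hinj
  have hG := dciG_smooth hL hsm hper hd hinj'
  have hGp := dciG_per hL hsm hper
  obtain ⟨B, hB0, hB⟩ := dci_trapezoid hL hG hGp (dci_int_zero hL hsm hper harc hinj' horient) κ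
  obtain ⟨B1, hB10, hB1⟩ := dci_bdd hL (dciD_smooth hG).continuous (dciD_per hG hGp)
  obtain ⟨N₁, hN₁⟩ := exists_nat_ge (2 * π / L * (2 * M))
  refine ⟨2 * L * M * B1 + L ^ (κ + 1) * B + 16 * π ^ 2 * M / L + 1, by positivity,
    max 2 N₁, fun N hN k => ?_⟩
  have hN2 : 2 ≤ N := (le_max_left _ _).trans hN
  have hNN1 : N₁ ≤ N := (le_max_right _ _).trans hN
  have hN0 : 0 < N := by omega
  have hNR : (0 : ℝ) < N := by exact_mod_cast hN0
  have hN1R : (1 : ℝ) ≤ N := by exact_mod_cast hN0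
  set s := ms N k with hs
  have hsI : s ∈ Set.Icc 0 L := ⟨(hms N hN2 k).1.1, (hms N hN2 k).1.2.le⟩
  set h := L / (N : ℝ) with hh
  set η := 2 * M / (N : ℝ) ^ (κ + 1) with hη
  have hη0 : 0 ≤ η := by positivity
  set x : ℕ → ℝ := fun j => 1 / 2 * h - (k : ℕ) * h + j * h with hx
  -- the mesh points are close to the shifted uniform mesh
  have hclose : ∀ j : Fin N, |(mst N j - s) - x j| ≤ η := by
    intro j
    have h1 := (hms N hN2 k).2
    have h2 := (hmst N hN2 j).2
    have e : (mst N j - s) - x j = (mst N j - (((j : ℕ) : ℝ) + 1/2) * L / (N : ℝ)) -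
        (s - ((k : ℕ) : ℝ) * L / (N : ℝ)) := by
      simp only [hx, hh]
      ring
    rw [e]
    refine (abs_sub _ _).trans ?_
    have : η = M / (N : ℝ) ^ (κ + 1) + M / (N : ℝ) ^ (κ + 1) := by rw [hη]; ring
    rw [this]
    exact add_le_add h2 h1
  have hηN : 2 * π / L * η ≤ 1 / N := by
    have h1 : 2 * π / L * (2 * M) ≤ N := hN₁.trans (by exact_mod_cast hNN1)
    have h2 : (N : ℝ) * N ≤ (N : ℝ) ^ (κ + 1) := by
      rw [← pow_two]
      exact pow_le_pow_right₀ hN1R (by omega)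
    have h3 : 2 * π / L * η = (2 * π / L * (2 * M)) / (N : ℝ) ^ (κ + 1) := by
      rw [hη]; ring
    rw [h3, div_le_div_iff₀ (by positivity) hNR]
    nlinarith
  have hdl : ∀ j : Fin N, 2 / (N : ℝ) ≤ ‖1 - dciE L (-(x j))‖ := fun j =>
    dci_d_shift hL j.2 k.2
  have hpert := fun j : Fin N => dci_pert hL hN0 (hdl j) hηN (hclose j)
  set A : ℂ := ((2 * π / L : ℝ) : ℂ) * Complex.I with hA
  have hAn : ‖A‖ = 2 * π / L := by
    rw [hA, norm_mul, Complex.norm_I, mul_one, Complex.norm_real, Real.norm_eq_abs,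
      abs_of_pos (by positivity)]
  -- decomposition
  have hterm : ∀ j : Fin N, deriv l (mst N j) / (l (mst N j) - l s) =
      (dciG L l (s, mst N j) - dciG L l (s, s + x j)) + dciG L l (s, s + x j) +
        A * (dciC L (mst N j - s) - dciC L (x j)) + A * dciC L (x j) := by
    intro j
    have hne : dciE L (mst N j) ≠ dciE L s := by
      intro h'
      apply (hpert j).1
      rw [neg_sub, sub_eq_add_neg, dciE_add, dciE_neg, h', mul_inv_cancel₀ (dciE_ne L s)]
    rw [dciG_formula hL hsm hper hinj' s _ hne]
    ring
  have hC : ∑ j : Fin N, dciC L (x j) = (N : ℂ) / 2 := by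
    rw [← Finset.sum_range (fun j => dciC L (x j))]
    rw [← dci_sum_C hL hN0]
    have := dci_sum_per_nat hN0 (φ := dciC L) (dciC_per hL) (1 / 2 * h) k
    simp only [hx]
    rw [this]
    refine Finset.sum_congr rfl fun j _ => ?_
    congr 1
    ring
  have hD : ∑ j : Fin N, 1 / ‖1 - dciE L (-(x j))‖ ^ 2 ≤ (N : ℝ) ^ 2 := by
    rw [← Finset.sum_range (fun j => 1 / ‖1 - dciE L (-(x j))‖ ^ 2)]
    refine le_of_eq_of_le ?_ (dci_sum_d hL hN0)
    have hp : ∀ t, 1 / ‖1 - dciE L (-(t + L))‖ ^ 2 = 1 / ‖1 - dciE L (-t)‖ ^ 2 := by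
      intro t
      rw [← dciE_per hL (-(t + L))]
      congr 5
      ring
    have := dci_sum_per_nat hN0 (φ := fun t => 1 / ‖1 - dciE L (-t)‖ ^ 2) hp (1 / 2 * h) k
    simp only [hx]
    rw [this]
    refine Finset.sum_congr rfl fun j _ => ?_
    congr 5
    ring
  -- the four bounds
  have b1 : ‖∑ j : Fin N, (dciG L l (s, mst N j) - dciG L l (s, s + x j))‖ ≤ N * (B1 * η) := by
    refine (norm_sum_le _ _).trans ?_
    refine (Finset.sum_le_sum (g := fun _ => B1 * η) fun j _ => ?_).trans (by simp)
    have := convex_univ.norm_image_sub_le_of_norm_hasDerivWithin_le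
        (f := fun t => dciG L l (s, t)) (f' := fun t => dciD (dciG L l) (s, t))
        (x := s + x j) (y := mst N j) (C := B1)
        (fun z _ => (dciD_hasDeriv hG s z).hasDerivWithinAt) (fun z _ => hB1 s hsI z) trivial trivial
    refine this.trans ?_
    gcongr
    rw [Real.norm_eq_abs, ← sub_sub]
    exact hclose j
  have b2 : ‖∑ j : Fin N, dciG L l (s, s + x j)‖ ≤ h ^ κ * (N * B) := by
    rw [← Finset.sum_range (fun j => dciG L l (s, s + x j))]
    have := hB N hN0 s hsI (s + 1 / 2 * h - (k : ℕ) * h)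
    refine le_of_eq_of_le ?_ this
    congr 1
    refine Finset.sum_congr rfl fun j _ => ?_
    congr 2
    simp only [hx]
    ring
  have b3 : ‖∑ j : Fin N, (dciC L (mst N j - s) - dciC L (x j))‖ ≤
      2 * π / L * η * 2 * (N : ℝ) ^ 2 := by
    refine (norm_sum_le _ _).trans ?_
    refine (Finset.sum_le_sum fun j _ => (hpert j).2).trans ?_
    rw [← Finset.mul_sum]
    gcongr
  have hsum : ((h : ℝ) : ℂ) * ∑ j : Fin N, deriv l (mst N j) / (l (mst N j) - l s)
        - (π : ℂ) * Complex.I =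
      (h : ℂ) * ∑ j : Fin N, (dciG L l (s, mst N j) - dciG L l (s, s + x j)) +
      (h : ℂ) * ∑ j : Fin N, dciG L l (s, s + x j) +
      (h : ℂ) * (A * ∑ j : Fin N, (dciC L (mst N j - s) - dciC L (x j))) := by
    rw [Finset.sum_congr rfl fun j _ => hterm j, Finset.sum_add_distrib, Finset.sum_add_distrib,
      Finset.sum_add_distrib, ← Finset.mul_sum, ← Finset.mul_sum, hC]
    have : (h : ℂ) * (A * ((N : ℂ) / 2)) = π * Complex.I := by
      have hLc : (L : ℂ) ≠ 0 := by exact_mod_cast hL.ne'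
      have hNc : (N : ℂ) ≠ 0 := by exact_mod_cast hN0.ne'
      rw [hA, hh]
      push_cast
      field_simp
    linear_combination this
  have hh0 : 0 < h := div_pos hL hNR
  have hhn : ‖(h : ℂ)‖ = h := by
    rw [Complex.norm_real, Real.norm_eq_abs, abs_of_pos hh0]
  rw [hsum]
  refine (norm_add_le _ _).trans ((add_le_add (norm_add_le _ _) le_rfl).trans ?_)
  rw [norm_mul, norm_mul, norm_mul, norm_mul, hhn, hAn]
  have hNk : (0 : ℝ) < (N : ℝ) ^ κ := by positivity
  have c1 : h * ‖∑ j : Fin N, (dciG L l (s, mst N j) - dciG L l (s, s + x j))‖ ≤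
      2 * L * M * B1 / (N : ℝ) ^ κ := by
    calc _ ≤ h * (N * (B1 * η)) := by gcongr
      _ = 2 * L * M * B1 / (N : ℝ) ^ κ / N := by rw [hh, hη]; field_simp; ring
      _ ≤ _ := div_le_self (by positivity) hN1R
  have c2 : h * ‖∑ j : Fin N, dciG L l (s, s + x j)‖ ≤ L ^ (κ + 1) * B / (N : ℝ) ^ κ := by
    calc _ ≤ h * (h ^ κ * (N * B)) := by gcongr
      _ = _ := by rw [hh, div_pow]; field_simp; ring
  have c3 : h * (2 * π / L * ‖∑ j : Fin N, (dciC L (mst N j - s) - dciC L (x j))‖) ≤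
      16 * π ^ 2 * M / L / (N : ℝ) ^ κ := by
    calc _ ≤ h * (2 * π / L * (2 * π / L * η * 2 * (N : ℝ) ^ 2)) := by gcongr
      _ = _ := by rw [hh, hη]; field_simp; ring
  have e : (2 * L * M * B1 + L ^ (κ + 1) * B + 16 * π ^ 2 * M / L + 1) / (N : ℝ) ^ κ =
      2 * L * M * B1 / (N : ℝ) ^ κ + L ^ (κ + 1) * B / (N : ℝ) ^ κ +
        16 * π ^ 2 * M / L / (N : ℝ) ^ κ + 1 / (N : ℝ) ^ κ := by ring
  rw [e]
  have : 0 ≤ 1 / (N : ℝ) ^ κ := by positivity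
  linarith
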